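/- Fix κ > 0, an integer m ≥ 3, and n ≥ 1. Let (a_k)_{k≥1} be a sequence of positive reals with a_k → ∞, and for each k let φ_k be twice continuously differentiable on B_κ^n and satisfy the smoothed HJB equation with parameter a_k at every point of B_κ^n. Suppose u is twice continuously differentiable on B_κ^n and that φ_k → u, Dφ_k → Du, and D²φ_k → D²u uniformly on the set {x : |x| ≤ κ √n (log n)^m − δ} for every δ > 0. Then u satisfies the HJB equation at every point of B_κ^n. -/

import Mathlib

/-!
The equation is stable under pointwise convergence of its ingredients, so the proof passes to the
limit at each fixed `x` of the open ball. Such an `x` lies in `{‖x‖ ≤ R - δ}` with `δ = R - ‖x‖ > 0`,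
hence `φ_k`, `Dφ_k`, `D²φ_k` converge at `x`. The coefficient `f_{a_k}` converges to the positive
part because `|f_a y - y⁺| ≤ 1 / (16 a)` (`abs_fa_sub_max_le`), and the minimum over finitely many
indices is continuous (`tendsto_iInf_fin`). Twice differentiability enters only to identify `pd2`, the
derivative of a coordinate of the gradient, with a diagonal entry of the Hessian (`pd2_eq`).
-/

open Finset Metric Set

noncomputable section

namespace HW

variable {I : ℕ}

/-- `ℝ^I` with the Euclidean norm. -/
abbrev Euc (I : ℕ) := EuclideanSpace ℝ (Fin I)

/-- First partial derivative `∂_i φ (x)`. -/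
noncomputable def pd1 (φ : Euc I → ℝ) (i : Fin I) (x : Euc I) : ℝ :=
  fderiv ℝ φ x (EuclideanSpace.single i 1)

/-- Second partial derivative `∂²_{ii} φ (x)`. -/
noncomputable def pd2 (φ : Euc I → ℝ) (i : Fin I) (x : Euc I) : ℝ :=
  fderiv ℝ (pd1 φ i) x (EuclideanSpace.single i 1)

/-- The fluid fraction `ν_i = (a_i/μ_i) · μ̄` where `μ̄ = (∑ a_j/μ_j)⁻¹`. -/
noncomputable def nu (μ a : Fin I → ℝ) (i : Fin I) : ℝ :=
  (a i / μ i) * (∑ j, a j / μ j)⁻¹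

/-- The radius `κ √n (log n)^m` of the ball `B_κ^n`. -/
noncomputable def Rad (κ : ℝ) (m n : ℕ) : ℝ :=
  κ * Real.sqrt n * Real.log n ^ m

/-- The HJB equation at `x`, with a general "front" function `g` in place of `(e·x)^+`
(the true HJB equation uses `g y = max y 0`, the smoothed one uses `g = f_a`).
Here `lam = λ^n`, `l_i^n = a_i λ^n − μ_i ν_i n`. -/
def HJBgen (μ a c : Fin I → ℝ) (γ lam : ℝ) (n : ℕ) (g : ℝ → ℝ)
    (φ : Euc I → ℝ) (x : Euc I) : Prop :=
  0 = -γ * φ x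
    + g (∑ j, x j) * (⨅ i, (c i + μ i * pd1 φ i x - (1 / 2) * μ i * pd2 φ i x))
    + ∑ i, ((a i * lam - μ i * nu μ a i * n) - μ i * x i) * pd1 φ i x
    + (1 / 2) * ∑ i, (a i * lam + μ i * (nu μ a i * n + x i)) * pd2 φ i x

/-- A classical solution on `B = ball 0 R`: Lipschitz on the closed ball, `C²` on the open
ball, vanishing on the boundary sphere, and satisfying the (generalized) HJB equation on `B`. -/
def IsSolGen (μ a c : Fin I → ℝ) (γ lam : ℝ) (n : ℕ) (R : ℝ) (g : ℝ → ℝ)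
    (φ : Euc I → ℝ) : Prop :=
  (∃ K : NNReal, LipschitzOnWith K φ (closedBall 0 R)) ∧
  ContDiffOn ℝ 2 φ (ball 0 R) ∧
  (∀ x : Euc I, ‖x‖ = R → φ x = 0) ∧
  (∀ x ∈ ball (0 : Euc I) R, HJBgen μ a c γ lam n g φ x)

/-- α-Hölder continuity of the second derivative on every compact subset of `ball 0 R`. -/
def HolderSecond (α R : ℝ) (φ : Euc I → ℝ) : Prop :=
  ∀ K : Set (Euc I), K ⊆ ball 0 R → IsCompact K →
    ∃ C : ℝ, ∀ x ∈ K, ∀ y ∈ K,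
      ‖fderiv ℝ (fderiv ℝ φ) x - fderiv ℝ (fderiv ℝ φ) y‖ ≤ C * ‖x - y‖ ^ α

/-- The smoothing `f_a` of the positive-part function. -/
noncomputable def fa (a y : ℝ) : ℝ :=
  if 1 / (4 * a) ≤ y then y
  else if -(1 / (4 * a)) ≤ y then a * y ^ 2 + y / 2 + 1 / (16 * a)
  else 0

theorem abs_fa_sub_max_le {a : ℝ} (ha : 0 < a) (y : ℝ) :
    |fa a y - max y 0| ≤ 1 / (16 * a) := by
  -- In terms of the half-width `b = 1 / (4 a)` of the smoothing window, the claim is polynomial.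
  obtain ⟨b, hb⟩ : ∃ b, b = 1 / (4 * a) := ⟨_, rfl⟩
  have hb0 : 0 < b := by rw [hb]; positivity
  have hab : a * b = 1 / 4 := by rw [hb]; field_simp
  have hb4 : 1 / (16 * a) = b / 4 := by rw [hb]; field_simp; norm_num
  unfold fa
  rw [hb4, ← hb]
  split_ifs with h1 h2
  · rw [max_eq_left (by linarith)]
    simp only [sub_self, abs_zero]
    positivity
  · rcases le_total 0 y with hy | hy
    · rw [max_eq_left hy]
      have e : a * y ^ 2 + y / 2 + b / 4 - y = a * (y - b) ^ 2 := by
        linear_combination (2 * y - b) * hab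
      have hsq : (y - b) ^ 2 ≤ b ^ 2 := by nlinarith
      have hmul := mul_le_mul_of_nonneg_left hsq ha.le
      have hbb : a * b ^ 2 = b / 4 := by linear_combination b * hab
      rw [e, abs_of_nonneg (by positivity)]
      linarith
    · rw [max_eq_right hy]
      have e : a * y ^ 2 + y / 2 + b / 4 - 0 = a * (y + b) ^ 2 := by
        linear_combination (-2 * y - b) * hab
      have hsq : (y + b) ^ 2 ≤ b ^ 2 := by nlinarith
      have hmul := mul_le_mul_of_nonneg_left hsq ha.le
      have hbb : a * b ^ 2 = b / 4 := by linear_combination b * hab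
      rw [e, abs_of_nonneg (by positivity)]
      linarith
  · rw [max_eq_right (by linarith)]
    simp only [sub_self, abs_zero]
    positivity

theorem tendsto_fa {aseq : ℕ → ℝ} (hpos : ∀ k, 0 < aseq k)
    (htop : Filter.Tendsto aseq Filter.atTop Filter.atTop) (y : ℝ) :
    Filter.Tendsto (fun k => fa (aseq k) y) Filter.atTop (nhds (max y 0)) := by
  rw [tendsto_iff_norm_sub_tendsto_zero]
  refine squeeze_zero (fun _ => norm_nonneg _) (fun k => abs_fa_sub_max_le (hpos k) y) ?_
  simp only [one_div]
  exact (htop.const_mul_atTop (by norm_num : (0 : ℝ) < 16)).inv_tendsto_atTop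

theorem tendsto_iInf_fin (hI : 0 < I) {f : ℕ → Fin I → ℝ} {g : Fin I → ℝ}
    (h : ∀ i, Filter.Tendsto (fun k => f k i) Filter.atTop (nhds (g i))) :
    Filter.Tendsto (fun k => ⨅ i, f k i) Filter.atTop (nhds (⨅ i, g i)) := by
  have : Nonempty (Fin I) := ⟨⟨0, hI⟩⟩
  simp only [← Finset.inf'_univ_eq_ciInf]
  exact Filter.Tendsto.finset_inf'_nhds_apply Finset.univ_nonempty fun i _ => h i

theorem tendsto_clm_apply {E F : Type*} [NormedAddCommGroup E] [NormedSpace ℝ E]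
    [NormedAddCommGroup F] [NormedSpace ℝ F] {L : ℕ → E →L[ℝ] F} {L' : E →L[ℝ] F}
    (h : Filter.Tendsto L Filter.atTop (nhds L')) (v : E) :
    Filter.Tendsto (fun k => L k v) Filter.atTop (nhds (L' v)) :=
  ((ContinuousLinearMap.apply ℝ F v).continuous.tendsto L').comp h

theorem pd2_eq {φ : Euc I → ℝ} {R : ℝ} (h : ContDiffOn ℝ 2 φ (ball 0 R)) {x : Euc I}
    (hx : x ∈ ball (0 : Euc I) R) (i : Fin I) :
    pd2 φ i x = fderiv ℝ (fderiv ℝ φ) x (EuclideanSpace.single i 1)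
      (EuclideanSpace.single i 1) := by
  have hc : ContDiffAt ℝ 2 φ x := h.contDiffAt (isOpen_ball.mem_nhds hx)
  have hd : DifferentiableAt ℝ (fderiv ℝ φ) x :=
    (hc.fderiv_right (m := 1) (by norm_num)).differentiableAt (by norm_num)
  have hd' : HasFDerivAt (pd1 φ i) _ x :=
    hd.hasFDerivAt.clm_apply (hasFDerivAt_const (EuclideanSpace.single i (1 : ℝ)) x)
  rw [pd2, hd'.fderiv]
  simp

/-- Fix `κ > 0`, `m ≥ 3`, `n`.  If `a_k → ∞`, each `φ_k` is `C²` on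
`B_κ^n` and solves the smoothed HJB equation with parameter `a_k` there, `u` is `C²` on
`B_κ^n`, and `φ_k → u`, `Dφ_k → Du`, `D²φ_k → D²u` uniformly on
`{|x| ≤ κ√n(log n)^m − δ}` for every `δ > 0`, then `u` solves the (nonsmooth) HJB equation
at every point of `B_κ^n`. -/
theorem stmt11
    (I : ℕ) (hI : 0 < I)
    (μ a c : Fin I → ℝ) (γ β : ℝ)
    (hμ : ∀ i, 0 < μ i) (ha : ∀ i, 0 < a i) (hsum : ∑ i, a i = 1)
    (hc : ∀ i, 0 < c i) (hγ : 0 < γ)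
    (lam : ℕ → ℝ)
    (hlam : ∀ n : ℕ, 1 ≤ n → 0 < lam n ∧
      (n : ℝ) = lam n * (∑ i, a i / μ i)
        + β * Real.sqrt (lam n * (∑ i, a i / μ i)))
    (κ : ℝ) (hκ : 0 < κ) (m : ℕ) (hm : 3 ≤ m)
    (n : ℕ) (hn : 1 ≤ n)
    (aseq : ℕ → ℝ) (haseq : ∀ k, 0 < aseq k)
    (haseqtop : Filter.Tendsto aseq Filter.atTop Filter.atTop)
    (φk : ℕ → Euc I → ℝ)
    (hφkC2 : ∀ k, ContDiffOn ℝ 2 (φk k) (ball 0 (Rad κ m n)))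
    (hφksol : ∀ k, ∀ x ∈ ball (0 : Euc I) (Rad κ m n),
      HJBgen μ a c γ (lam n) n (fa (aseq k)) (φk k) x)
    (u : Euc I → ℝ) (huC2 : ContDiffOn ℝ 2 u (ball 0 (Rad κ m n)))
    (hconv0 : ∀ δ : ℝ, 0 < δ →
      TendstoUniformlyOn φk u Filter.atTop
        {x : Euc I | ‖x‖ ≤ Rad κ m n - δ})
    (hconv1 : ∀ δ : ℝ, 0 < δ →
      TendstoUniformlyOn (fun k x => fderiv ℝ (φk k) x) (fun x => fderiv ℝ u x)
        Filter.atTop {x : Euc I | ‖x‖ ≤ Rad κ m n - δ})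
    (hconv2 : ∀ δ : ℝ, 0 < δ →
      TendstoUniformlyOn (fun k x => fderiv ℝ (fderiv ℝ (φk k)) x)
        (fun x => fderiv ℝ (fderiv ℝ u) x)
        Filter.atTop {x : Euc I | ‖x‖ ≤ Rad κ m n - δ}) :
    ∀ x ∈ ball (0 : Euc I) (Rad κ m n),
      HJBgen μ a c γ (lam n) n (fun y => max y 0) u x := by
  intro x hx
  have hxR : ‖x‖ < Rad κ m n := by simpa using hx
  have hδ : 0 < Rad κ m n - ‖x‖ := sub_pos.2 hxR
  have hmem : x ∈ {x' : Euc I | ‖x'‖ ≤ Rad κ m n - (Rad κ m n - ‖x‖)} := by simp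
  have h0 := (hconv0 _ hδ).tendsto_at hmem
  have h1 (i : Fin I) :
      Filter.Tendsto (fun k => pd1 (φk k) i x) Filter.atTop (nhds (pd1 u i x)) :=
    tendsto_clm_apply ((hconv1 _ hδ).tendsto_at hmem) _
  have h2 (i : Fin I) :
      Filter.Tendsto (fun k => pd2 (φk k) i x) Filter.atTop (nhds (pd2 u i x)) := by
    simp only [fun k => pd2_eq (hφkC2 k) hx i, pd2_eq huC2 hx i]
    exact tendsto_clm_apply (tendsto_clm_apply ((hconv2 _ hδ).tendsto_at hmem) _) _
  have hmin := tendsto_iInf_fin hI fun i =>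
    (((h1 i).const_mul (μ i)).const_add (c i)).sub ((h2 i).const_mul (1 / 2 * μ i))
  have hlim := (((h0.const_mul (-γ)).add
    ((tendsto_fa haseq haseqtop (∑ j, x j)).mul hmin)).add
    (tendsto_finsetSum Finset.univ fun i _ =>
      (h1 i).const_mul ((a i * lam n - μ i * nu μ a i * n) - μ i * x i))).add
    ((tendsto_finsetSum Finset.univ fun i _ =>
      (h2 i).const_mul (a i * lam n + μ i * (nu μ a i * n + x i))).const_mul (1 / 2))
  -- The right-hand sides of the smoothed equations are constantly `0`, so their limit is `0`.
  exact tendsto_nhds_unique (tendsto_const_nhds.congr fun k => hφksol k x hx) hlim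

end HW
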